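/- arXiv:cs/0210027 — 2 statements merged into one kernel-verified Lean document; each statement's English description precedes it below -/
import Mathlib

section
/- Let P be a propositional normal logic program whose Fitting model M is total. Then M⁺ = M ∩ B_P is a stable model of P. -/
namespace LP

/-- A literal over a set of propositional atoms: an atom or a negated atom. -/
inductive Lit (atom : Type) where
  | pos : atom → Lit atom
  | neg : atom → Lit atom

/-- The underlying atom of a literal. -/
def Lit.atomOf {atom : Type} : Lit atom → atom
  | .pos a => a
  | .neg a => a

/-- A clause `head ← pos₁,…,posₙ, ¬neg₁,…,¬negₘ`. -/
structure Clause (atom : Type) where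
  head : atom
  pos : Finset atom
  neg : Finset atom

variable {atom : Type}

/-- A (propositional) normal logic program: a set of clauses. -/
abbrev Program (atom : Type) := Set (Clause atom)

/-- Partial interpretations: sets of literals. -/
abbrev Interp (atom : Type) := Set (Lit atom)

def Consistent (I : Interp atom) : Prop := ∀ a : atom, ¬ (Lit.pos a ∈ I ∧ Lit.neg a ∈ I)

def Total (I : Interp atom) : Prop := ∀ a : atom, Lit.pos a ∈ I ∨ Lit.neg a ∈ I

/-- An atom is defined (true or false, i.e. not undefined) in `I`. -/
def Defined (I : Interp atom) (A : atom) : Prop := Lit.pos A ∈ I ∨ Lit.neg A ∈ I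

/-- Every body literal of the clause is true in `I`. -/
def BodyTrue (I : Interp atom) (C : Clause atom) : Prop :=
  (∀ a ∈ C.pos, Lit.pos a ∈ I) ∧ (∀ b ∈ C.neg, Lit.neg b ∈ I)

/-- Some body literal of the clause is false in `I`. -/
def BodyFalse (I : Interp atom) (C : Clause atom) : Prop :=
  (∃ a ∈ C.pos, Lit.neg a ∈ I) ∨ (∃ b ∈ C.neg, Lit.pos b ∈ I)

/-- Three-valued model. -/
def Model3 (P : Program atom) (I : Interp atom) : Prop :=
  Consistent I ∧ ∀ C ∈ P,
    (BodyTrue I C → Lit.pos C.head ∈ I) ∧ (¬ BodyFalse I C → Lit.neg C.head ∉ I)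

/-- Two-valued model. -/
def Model2 (P : Program atom) (M : Set atom) : Prop :=
  ∀ C ∈ P, (∀ a ∈ C.pos, a ∈ M) → (∀ b ∈ C.neg, b ∉ M) → C.head ∈ M

/-- A program is definite if no clause has negative body literals. -/
def Definite (P : Program atom) : Prop := ∀ C ∈ P, C.neg = ∅

/-- The one-step operator `T_P⁺` for definite programs. -/
def Tplus (P : Program atom) (M : Set atom) : Set atom :=
  {A | ∃ C ∈ P, C.head = A ∧ C.neg = ∅ ∧ ∀ a ∈ C.pos, a ∈ M}

def TplusIter (P : Program atom) : ℕ → Set atom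
  | 0 => ∅
  | n + 1 => Tplus P (TplusIter P n)

/-- `T_P⁺ ↑ ω`, the least two-valued model of a definite program. -/
def TplusOmega (P : Program atom) : Set atom := ⋃ n, TplusIter P n

/-- The Gelfond–Lifschitz reduct `P/M`. -/
def GLreduct (P : Program atom) (M : Set atom) : Program atom :=
  {C' | ∃ C ∈ P, (∀ b ∈ C.neg, b ∉ M) ∧ C' = ⟨C.head, C.pos, ∅⟩}

/-- The Gelfond–Lifschitz operator. -/
def GLop (P : Program atom) (M : Set atom) : Set atom := TplusOmega (GLreduct P M)

/-- Stable model. -/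
def Stable (P : Program atom) (M : Set atom) : Prop := GLop P M = M

def posLits (S : Set atom) : Interp atom := Lit.pos '' S
def negLits (S : Set atom) : Interp atom := Lit.neg '' S

/-- Three-valued immediate-consequence operator `T_P`. -/
def TP (P : Program atom) (I : Interp atom) : Set atom :=
  {A | ∃ C ∈ P, C.head = A ∧ BodyTrue I C}

/-- `F_P`: atoms all of whose clauses have false bodies. -/
def FP (P : Program atom) (I : Interp atom) : Set atom :=
  {A | ∀ C ∈ P, C.head = A → BodyFalse I C}

/-- Fitting's operator `Φ_P`. -/
def Phi (P : Program atom) (I : Interp atom) : Interp atom :=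
  posLits (TP P I) ∪ negLits (FP P I)

/-- Knaster–Tarski least (pre-)fixed point of an operator on sets. -/
def lfpSet {L : Type*} (F : Set L → Set L) : Set L := ⋂₀ {I | F I ⊆ I}

/-- Knaster–Tarski greatest (post-)fixed point of an operator on sets. -/
def gfpSet {L : Type*} (F : Set L → Set L) : Set L := ⋃₀ {I | I ⊆ F I}

/-- The Fitting (Kripke–Kleene) model: least fixed point of `Φ_P`. -/
def FittingModel (P : Program atom) : Interp atom := lfpSet (Phi P)

/-- Transfinite iteration `F ↑ α` of an operator starting from `∅`. -/
noncomputable def iterOrd {L : Type*} (F : Set L → Set L) (α : Ordinal.{0}) : Set L :=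
  Ordinal.limitRecOn α ∅ (fun _ ih => F ih) (fun o _ ih => ⋃ β, ⋃ h : β < o, ih β h)

/-- `U` is an unfounded set of `P` with respect to `I`. -/
def Unfounded (P : Program atom) (I : Interp atom) (U : Set atom) : Prop :=
  ∀ A ∈ U, ∀ C ∈ P, C.head = A → BodyFalse I C ∨ ∃ a ∈ C.pos, a ∈ U

/-- The greatest unfounded set of `P` with respect to `I`. -/
def UP (P : Program atom) (I : Interp atom) : Set atom := ⋃₀ {U | Unfounded P I U}

/-- The van Gelder–Ross–Schlipf operator `W_P`. -/
def WP (P : Program atom) (I : Interp atom) : Interp atom :=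
  posLits (TP P I) ∪ negLits (UP P I)

/-- The well-founded model: least fixed point of `W_P`. -/
def WFModel (P : Program atom) : Interp atom := lfpSet (WP P)

/-- `P` satisfies (F) with respect to `I` and the level mapping `l`. -/
def CondF (P : Program atom) (I : Interp atom) (l : atom → Ordinal.{0}) : Prop :=
  ∀ A : atom, Defined I A →
    (Lit.pos A ∈ I ∧ ∃ C ∈ P, C.head = A ∧
        (∀ a ∈ C.pos, Lit.pos a ∈ I ∧ l a < l A) ∧
        (∀ b ∈ C.neg, Lit.neg b ∈ I ∧ l b < l A)) ∨
    (Lit.neg A ∈ I ∧ ∀ C ∈ P, C.head = A →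
        (∃ a ∈ C.pos, Lit.neg a ∈ I ∧ l a < l A) ∨
        (∃ b ∈ C.neg, Lit.pos b ∈ I ∧ l b < l A))

/-- `P` satisfies (WF) with respect to `I` and the level mapping `l`. -/
def CondWF (P : Program atom) (I : Interp atom) (l : atom → Ordinal.{0}) : Prop :=
  ∀ A : atom, Defined I A →
    (Lit.pos A ∈ I ∧ ∃ C ∈ P, C.head = A ∧
        (∀ a ∈ C.pos, Lit.pos a ∈ I ∧ l a < l A) ∧
        (∀ b ∈ C.neg, Lit.neg b ∈ I ∧ l b < l A)) ∨
    (Lit.neg A ∈ I ∧ ∀ C ∈ P, C.head = A →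
        (∃ a ∈ C.pos, Lit.neg a ∈ I ∧ l a ≤ l A) ∨
        (∃ b ∈ C.neg, Lit.pos b ∈ I ∧ l b < l A))

/-- `P` satisfies (WS) with respect to `I` and the level mapping `l`. -/
def CondWS (P : Program atom) (I : Interp atom) (l : atom → Ordinal.{0}) : Prop :=
  ∀ A : atom, Defined I A →
    (Lit.pos A ∈ I ∧ ∃ C ∈ P, C.head = A ∧
        (∀ a ∈ C.pos, Lit.pos a ∈ I ∧ l a < l A) ∧
        (∀ b ∈ C.neg, Lit.neg b ∈ I ∧ l b < l A)) ∨
    (Lit.neg A ∈ I ∧ ∀ C ∈ P, C.head = A →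
        (∃ a ∈ C.pos, Lit.neg a ∈ I ∧ l a < l A) ∨
        ((∀ a ∈ C.pos, l a ≤ l A) ∧ (∀ b ∈ C.neg, l b < l A) ∧
            ∃ a ∈ C.pos, Lit.neg a ∈ I) ∨
        (∃ b ∈ C.neg, Lit.pos b ∈ I ∧ l b < l A))

/-- `A` refers to `B`. -/
def RefersTo (P : Program atom) (A B : atom) : Prop :=
  ∃ C ∈ P, C.head = A ∧ (B ∈ C.pos ∨ B ∈ C.neg)

/-- `A` refers negatively to `B`. -/
def RefersNeg (P : Program atom) (A B : atom) : Prop :=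
  ∃ C ∈ P, C.head = A ∧ B ∈ C.neg

/-- `DepOn P A B`: `A` depends on `B`, i.e. `B ≤ A`. -/
def DepOn (P : Program atom) : atom → atom → Prop := Relation.TransGen (RefersTo P)

/-- `DepNeg P B A`: `B < A`, i.e. `A` depends negatively on `B`. -/
def DepNeg (P : Program atom) (B A : atom) : Prop :=
  ∃ C D, RefersNeg P C D ∧ (DepOn P A C ∨ C = A) ∧ (DepOn P D B ∨ B = D)

/-- `A ~ B`. -/
def Sim (P : Program atom) (A B : atom) : Prop :=
  A = B ∨ (DepNeg P A B ∧ DepNeg P B A)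

/-- The components of `P`: equivalence classes of `~`. -/
def IsComponent (P : Program atom) (C : Set atom) : Prop :=
  ∃ A : atom, C = {B | Sim P A B}

/-- A trivial component: a singleton `{A}` with `A ≮ A`. -/
def TrivialComponent (P : Program atom) (C : Set atom) : Prop :=
  ∃ A : atom, C = {A} ∧ ¬ DepNeg P A A

/-- The ordering `≺` on components. -/
def CompLt (P : Program atom) (C₁ C₂ : Set atom) : Prop :=
  C₁ ≠ C₂ ∧ ∀ A₁ ∈ C₁, ∃ A₂ ∈ C₂, DepNeg P A₁ A₂

def MinimalComponent (P : Program atom) (C : Set atom) : Prop :=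
  IsComponent P C ∧ ¬ ∃ C₂, IsComponent P C₂ ∧ CompLt P C₂ C

/-- The bottom stratum `S(P)`: union of all minimal components. -/
def bottomStratum (P : Program atom) : Set atom :=
  {A | ∃ C, MinimalComponent P C ∧ A ∈ C}

/-- The bottom layer `L(P)`: clauses with head in the bottom stratum. -/
def bottomLayer (P : Program atom) : Program atom :=
  {C ∈ P | C.head ∈ bottomStratum P}

/-- Delete from the body of `C` all literals true in `I`. -/
noncomputable def reduceClause (I : Interp atom) (C : Clause atom) : Clause atom :=
  letI : ∀ p : Prop, Decidable p := fun p => Classical.propDecidable p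
  ⟨C.head, C.pos.filter (fun a => Lit.pos a ∉ I), C.neg.filter (fun b => Lit.neg b ∉ I)⟩

/-- Steps (1) and (2) of the reduct of `P` with respect to `I`. -/
noncomputable def step12 (P : Program atom) (I : Interp atom) : Program atom :=
  {C' | ∃ C ∈ P, Lit.pos C.head ∉ I ∧ ¬ BodyFalse I C ∧ C' = reduceClause I C}

def IsUnitClause (C : Clause atom) : Prop := C.pos = ∅ ∧ C.neg = ∅

/-- The reduct `P/I` of Przymusinska–Przymusinski (steps (1)–(3)). -/
noncomputable def reduct (P : Program atom) (I : Interp atom) : Program atom :=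
  {C ∈ step12 P I | IsUnitClause C ∨ ¬ ∃ C' ∈ step12 P I, C'.head = C.head ∧ IsUnitClause C'}

/-- The atoms occurring in `P`. -/
def atomsOf (P : Program atom) : Set atom :=
  {A | ∃ C ∈ P, A = C.head ∨ A ∈ C.pos ∨ A ∈ C.neg}

/-- `R`: atoms undefined in `N` which are eliminated from `P` by reducing w.r.t. `N`. -/
noncomputable def Ratoms (P : Program atom) (N : Interp atom) : Set atom :=
  {A | A ∈ atomsOf P ∧ A ∉ atomsOf (reduct P N) ∧ ¬ Defined N A}

/-- The definite (partial) model of a definite program `Q`. -/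
def defPartialModel (Q : Program atom) : Interp atom :=
  posLits (TplusOmega Q) ∪ negLits (atomsOf Q \ TplusOmega Q)

/-- The stopping condition of the weakly perfect model construction at `N`. -/
noncomputable def stopCond (P : Program atom) (N : Interp atom) : Prop :=
  reduct P N = ∅ ∨ bottomStratum (reduct P N) = ∅ ∨
    ∃ C ∈ bottomLayer (reduct P N), C.neg ≠ ∅

/-- `M_α` computed from `N_α` (empty if the construction has stopped). -/
noncomputable def Mstep (P : Program atom) (N : Interp atom) : Interp atom :=
  letI : ∀ p : Prop, Decidable p := fun p => Classical.propDecidable p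
  if stopCond P N then ∅
  else defPartialModel (bottomLayer (reduct P N)) ∪ negLits (Ratoms P N)

/-- `N_α = ⋃_{0<δ<α} M_δ` of the weakly perfect model construction. -/
noncomputable def Nseq (P : Program atom) : Ordinal.{0} → Interp atom :=
  Ordinal.lt_wf.fix (C := fun _ => Interp atom)
    (fun α ih => ⋃ β : Ordinal.{0}, ⋃ h : β < α, Mstep P (ih β h))

/-- The stage at which the weakly perfect model construction stops. -/
noncomputable def wpStop (P : Program atom) : Ordinal.{0} :=
  sInf {α | stopCond P (Nseq P α)}

/-- The weakly perfect model `M_P = N_α ∪ ¬R_α` at the stopping stage `α`. -/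
noncomputable def weaklyPerfectModel (P : Program atom) : Interp atom :=
  Nseq P (wpStop P) ∪ negLits (Ratoms P (Nseq P (wpStop P)))

/-- Clause subsumption `C₁ ≼ C₂`. -/
def ClauseSub (C₁ C₂ : Clause atom) : Prop :=
  C₁.head = C₂.head ∧ C₁.pos ⊆ C₂.pos ∧ C₁.neg ⊆ C₂.neg

/-- `P'` subsumes `Q` model-consistently with respect to `I`: `P' ≼_I Q`. -/
def SubsumesMC (P' Q : Program atom) (I : Interp atom) : Prop :=
  (∀ C₁ ∈ P', ∃ C₂ ∈ Q, ClauseSub C₁ C₂ ∧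
      (∀ a ∈ C₂.pos, a ∉ C₁.pos → Lit.pos a ∈ I) ∧
      (∀ b ∈ C₂.neg, b ∉ C₁.neg → Lit.neg b ∈ I)) ∧
  (∀ C₂ ∈ Q, BodyTrue I C₂ → Lit.pos C₂.head ∉ I → ∃ C₁ ∈ P', ClauseSub C₁ C₂)


theorem BodyTrue.mono {I J : Interp atom} (h : I ⊆ J) {C : Clause atom} (hb : BodyTrue I C) :
    BodyTrue J C :=
  ⟨fun a ha => h (hb.1 a ha), fun b hb' => h (hb.2 b hb')⟩

theorem BodyFalse.mono {I J : Interp atom} (h : I ⊆ J) {C : Clause atom} (hb : BodyFalse I C) :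
    BodyFalse J C := by
  rcases hb with ⟨a, ha, h1⟩ | ⟨a, ha, h1⟩
  · exact Or.inl ⟨a, ha, h h1⟩
  · exact Or.inr ⟨a, ha, h h1⟩

theorem pos_mem_Phi {P : Program atom} {I : Interp atom} {A : atom} :
    Lit.pos A ∈ Phi P I ↔ ∃ C ∈ P, C.head = A ∧ BodyTrue I C := by
  simp [Phi, posLits, negLits, TP]

theorem neg_mem_Phi {P : Program atom} {I : Interp atom} {A : atom} :
    Lit.neg A ∈ Phi P I ↔ ∀ C ∈ P, C.head = A → BodyFalse I C := by
  simp [Phi, posLits, negLits, FP]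

theorem Phi_mono (P : Program atom) {I J : Interp atom} (h : I ⊆ J) : Phi P I ⊆ Phi P J := by
  rintro (A | A) hA
  · rw [pos_mem_Phi] at hA ⊢
    obtain ⟨C, hC, hh, hb⟩ := hA
    exact ⟨C, hC, hh, hb.mono h⟩
  · rw [neg_mem_Phi] at hA ⊢
    exact fun C hC hh => (hA C hC hh).mono h

theorem Fitting_least {P : Program atom} {I : Interp atom} (h : Phi P I ⊆ I) :
    FittingModel P ⊆ I := Set.sInter_subset_of_mem h

theorem Fitting_pre (P : Program atom) : Phi P (FittingModel P) ⊆ FittingModel P :=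
  Set.subset_sInter fun _ hI => (Phi_mono P (Fitting_least hI)).trans hI

theorem Fitting_post (P : Program atom) : FittingModel P ⊆ Phi P (FittingModel P) :=
  Fitting_least (Phi_mono P (Fitting_pre P))

theorem Fitting_consistent (P : Program atom) : Consistent (FittingModel P) := by
  have key : FittingModel P ⊆ {l | l ∈ FittingModel P ∧
      ¬ (Lit.pos l.atomOf ∈ FittingModel P ∧ Lit.neg l.atomOf ∈ FittingModel P)} := by
    apply Fitting_least
    intro l hl
    refine ⟨Fitting_pre P (Phi_mono P (fun _ h => h.1) hl), ?_⟩
    rintro ⟨hp, hn⟩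
    have hp' := pos_mem_Phi.1 (Fitting_post P hp)
    have hn' := neg_mem_Phi.1 (Fitting_post P hn)
    cases l with
    | pos A =>
      obtain ⟨C, hC, hh, hb⟩ := pos_mem_Phi.1 hl
      rcases hn' C hC hh with ⟨a, ha, h1⟩ | ⟨a, ha, h1⟩
      · exact (hb.1 a ha).2 ⟨(hb.1 a ha).1, h1⟩
      · exact (hb.2 a ha).2 ⟨h1, (hb.2 a ha).1⟩
    | neg A =>
      obtain ⟨C, hC, hh, hb⟩ := hp'
      rcases neg_mem_Phi.1 hl C hC hh with ⟨a, ha, h1⟩ | ⟨a, ha, h1⟩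
      · exact h1.2 ⟨hb.1 a ha, h1.1⟩
      · exact h1.2 ⟨h1.1, hb.2 a ha⟩
  intro a ha
  exact (key ha.1).2 ha

theorem TplusIter_mono (Q : Program atom) : Monotone (TplusIter Q) := by
  apply monotone_nat_of_le_succ
  intro n
  induction n with
  | zero => exact Set.empty_subset _
  | succ n ih =>
    rintro A ⟨C, hC, hh, hn, hp⟩
    exact ⟨C, hC, hh, hn, fun a ha => ih (hp a ha)⟩

theorem Tplus_omega_pre (Q : Program atom) : Tplus Q (TplusOmega Q) ⊆ TplusOmega Q := by
  rintro A ⟨C, hC, hh, hn, hp⟩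
  have : ∀ a : atom, ∃ n, a ∈ C.pos → a ∈ TplusIter Q n := by
    intro a
    by_cases ha : a ∈ C.pos
    · obtain ⟨n, h⟩ := Set.mem_iUnion.1 (hp a ha)
      exact ⟨n, fun _ => h⟩
    · exact ⟨0, fun h => absurd h ha⟩
  choose f hf using this
  exact Set.mem_iUnion.2 ⟨C.pos.sup f + 1, C, hC, hh, hn,
    fun a ha => TplusIter_mono Q (Finset.le_sup ha) (hf a ha)⟩

/-- if the Fitting model is total then its positive part is a stable model. -/
theorem total_fitting_is_stable {atom : Type} [Countable atom] (P : Program atom)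
    (h : Total (FittingModel P)) :
    Stable P {A | Lit.pos A ∈ FittingModel P} := by
  apply Set.Subset.antisymm
  · apply Set.iUnion_subset
    intro n
    induction n with
    | zero => exact Set.empty_subset _
    | succ n ih =>
      rintro A ⟨_, ⟨C, hC, hneg, rfl⟩, hh, _, hp⟩
      apply Fitting_pre P
      exact pos_mem_Phi.2 ⟨C, hC, hh, fun a ha => ih (hp a ha),
        fun b hb => (h b).resolve_left (hneg b hb)⟩
  · have key : FittingModel P ⊆ {l | l ∈ FittingModel P ∧ ∀ A, l = Lit.pos A →
        A ∈ GLop P {A | Lit.pos A ∈ FittingModel P}} := by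
      apply Fitting_least
      intro l hl
      refine ⟨Fitting_pre P (Phi_mono P (fun _ h => h.1) hl), ?_⟩
      rintro A rfl
      obtain ⟨C, hC, hh, hb⟩ := pos_mem_Phi.1 hl
      apply Tplus_omega_pre
      exact ⟨_, ⟨C, hC, fun b hb' hm => Fitting_consistent P b ⟨hm, (hb.2 b hb').1⟩, rfl⟩, hh, rfl,
        fun a ha => (hb.1 a ha).2 a rfl⟩
    intro A hA
    exact (key hA).2 A rfl

end LP
end

section
/- Let P be a propositional normal logic program, I a model of P, and l an I-partial level mapping such that P satisfies (WF) with respect to I and l. Then for every A ∈ dom(l) with l(A) = α: if A ∈ I then A ∈ W_P↑(α+1), and if ¬A ∈ I then ¬A ∈ W_P↑(α+1). In particular, for each ordinal α the set U of all atoms B with l(B) = α and ¬B ∈ I is an unfounded set of P with respect to W_P↑α. -/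
namespace LP

variable {atom : Type}

theorem iterOrd_zero' {L : Type*} (F : Set L → Set L) : iterOrd F 0 = ∅ := by
  unfold iterOrd
  exact Ordinal.limitRecOn_zero _ _ _

theorem iterOrd_succ' {L : Type*} (F : Set L → Set L) (α : Ordinal.{0}) :
    iterOrd F (α + 1) = F (iterOrd F α) := by
  unfold iterOrd
  exact Ordinal.limitRecOn_add_one _ _ _ _

theorem iterOrd_limit' {L : Type*} (F : Set L → Set L) (α : Ordinal.{0})
    (h : Order.IsSuccLimit α) :
    iterOrd F α = ⋃ β, ⋃ _ : β < α, iterOrd F β := by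
  unfold iterOrd
  exact Ordinal.limitRecOn_limit _ _ _ _ h

theorem iterOrd_le_succ {L : Type*} (F : Set L → Set L) (hF : Monotone F) (α : Ordinal.{0}) :
    iterOrd F α ⊆ iterOrd F (α + 1) := by
  induction α using Ordinal.limitRecOn with
  | zero => rw [iterOrd_zero']; exact Set.empty_subset _
  | add_one β ih =>
    rw [iterOrd_succ' F (β + 1)]
    nth_rewrite 1 [iterOrd_succ' F β]
    exact hF ih
  | limit β hβ ih =>
    intro x hx
    rw [iterOrd_limit' F β hβ] at hx
    simp only [Set.mem_iUnion] at hx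
    obtain ⟨γ, hγ, hx⟩ := hx
    have h1 := ih γ hγ hx
    rw [iterOrd_succ'] at h1 ⊢
    refine hF ?_ h1
    rw [iterOrd_limit' F β hβ]
    exact Set.subset_iUnion₂_of_subset γ hγ (subset_refl _)

theorem iterOrd_mono' {L : Type*} (F : Set L → Set L) (hF : Monotone F) (β : Ordinal.{0}) :
    ∀ α ≤ β, iterOrd F α ⊆ iterOrd F β := by
  induction β using Ordinal.limitRecOn with
  | zero =>
    intro α h
    rw [le_antisymm h (zero_le)]
  | add_one β ih =>
    intro α h
    rcases h.lt_or_eq with h | h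
    · exact (ih α (Order.lt_add_one_iff.mp h)).trans (iterOrd_le_succ F hF β)
    · rw [h]
  | limit β hβ ih =>
    intro α h
    rcases h.lt_or_eq with h | h
    · rw [iterOrd_limit' F β hβ]
      exact Set.subset_iUnion₂_of_subset α h (subset_refl _)
    · rw [h]

theorem BodyFalse_mono {atom : Type} {I J : Interp atom} (h : I ⊆ J) {C : Clause atom} :
    BodyFalse I C → BodyFalse J C := by
  rintro (⟨a, ha, h1⟩ | ⟨b, hb, h1⟩)
  · exact Or.inl ⟨a, ha, h h1⟩
  · exact Or.inr ⟨b, hb, h h1⟩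

theorem WP_mono {atom : Type} (P : Program atom) : Monotone (WP P) := by
  intro I J h
  apply Set.union_subset_union
  · apply Set.image_mono
    rintro A ⟨C, hC, hA, h1, h2⟩
    exact ⟨C, hC, hA, fun a ha => h (h1 a ha), fun b hb => h (h2 b hb)⟩
  · apply Set.image_mono
    rintro A ⟨U, hU, hA⟩
    exact ⟨U, fun A hA C hC e => (hU A hA C hC e).imp_left (BodyFalse_mono h), hA⟩

/-- if `P` satisfies (WF) w.r.t. a model `I` and level mapping `l`, then
every literal of `I` appears in `W_P↑(l(A)+1)`; in particular, for each ordinal `α`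
the set of atoms `B` with `l(B)=α` false in `I` is unfounded w.r.t. `W_P↑α`. -/
theorem condWF_implies_in_iterate {atom : Type} [Countable atom] (P : Program atom)
    (I : Interp atom) (l : atom → Ordinal.{0}) (hI : Model3 P I) (hWF : CondWF P I l) :
    (∀ A : atom,
      (Lit.pos A ∈ I → Lit.pos A ∈ iterOrd (WP P) (l A + 1)) ∧
      (Lit.neg A ∈ I → Lit.neg A ∈ iterOrd (WP P) (l A + 1))) ∧
    ∀ α : Ordinal.{0},
      Unfounded P (iterOrd (WP P) α) {B : atom | l B = α ∧ Lit.neg B ∈ I} := by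
  have unf : ∀ α : Ordinal.{0},
      (∀ A, l A < α → (Lit.pos A ∈ I → Lit.pos A ∈ iterOrd (WP P) α) ∧
        (Lit.neg A ∈ I → Lit.neg A ∈ iterOrd (WP P) α)) →
      Unfounded P (iterOrd (WP P) α) {B : atom | l B = α ∧ Lit.neg B ∈ I} := by
    rintro α ih A ⟨hl, hA⟩ C hC e
    rcases hWF A (Or.inr hA) with h | h
    · exact absurd ⟨h.1, hA⟩ (hI.1 A)
    rcases h.2 C hC e with ⟨a, ha, h1, h2⟩ | ⟨b, hb, h1, h2⟩
    · rw [hl] at h2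
      rcases h2.lt_or_eq with h2 | h2
      · exact Or.inl (Or.inl ⟨a, ha, (ih a h2).2 h1⟩)
      · exact Or.inr ⟨a, ha, h2, h1⟩
    · rw [hl] at h2
      exact Or.inl (Or.inr ⟨b, hb, (ih b h2).1 h1⟩)
  have main : ∀ α : Ordinal.{0}, ∀ A, l A = α →
      (Lit.pos A ∈ I → Lit.pos A ∈ iterOrd (WP P) (α + 1)) ∧
      (Lit.neg A ∈ I → Lit.neg A ∈ iterOrd (WP P) (α + 1)) := by
    intro α
    induction α using WellFoundedLT.induction with
    | ind α ih =>
    have ih' : ∀ A, l A < α → (Lit.pos A ∈ I → Lit.pos A ∈ iterOrd (WP P) α) ∧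
        (Lit.neg A ∈ I → Lit.neg A ∈ iterOrd (WP P) α) := by
      intro A hA
      have hm := iterOrd_mono' (WP P) (WP_mono P) α (l A + 1) (Order.add_one_le_of_lt hA)
      exact ⟨fun h => hm ((ih _ hA A rfl).1 h), fun h => hm ((ih _ hA A rfl).2 h)⟩
    intro A hl
    rw [iterOrd_succ']
    constructor
    · intro hA
      rcases hWF A (Or.inl hA) with h | h
      · obtain ⟨-, C, hC, e, h1, h2⟩ := h
        rw [hl] at h1 h2
        exact Or.inl ⟨A, ⟨C, hC, e, fun a ha => (ih' a (h1 a ha).2).1 (h1 a ha).1,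
          fun b hb => (ih' b (h2 b hb).2).2 (h2 b hb).1⟩, rfl⟩
      · exact absurd ⟨hA, h.1⟩ (hI.1 A)
    · intro hA
      exact Or.inr ⟨A, ⟨_, unf α ih', hl, hA⟩, rfl⟩
  refine ⟨fun A => main _ A rfl, fun α => unf α fun A hA => ?_⟩
  have hm := iterOrd_mono' (WP P) (WP_mono P) α (l A + 1) (Order.add_one_le_of_lt hA)
  exact ⟨fun h => hm ((main _ A rfl).1 h), fun h => hm ((main _ A rfl).2 h)⟩

end LP
end
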